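/- Suppose (P) has a KKT point (Assumption 1) and fix μ > 0. Then g_μ is a (finite, concave) continuously differentiable function on ℝ^m with gradient ∇g_μ(y) = −(y − π_μ(y))/μ, where π_μ(y) ∈ K* is the unique maximizer of z ↦ g₀(z) − (1/(2μ))‖z − y‖₂² over K*; the gradient ∇g_μ is Lipschitz continuous with Lipschitz constant 1/μ; and every KKT point y* of (P) maximizes g_μ, i.e. g_μ(y*) = sup_{y ∈ ℝ^m} g_μ(y). -/

import Mathlib

open RealInnerProductSpace Metric

/-- The dual cone `K* = {y : ⟪y, s⟫ ≥ 0 for all s ∈ K}`. -/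
def dualCone {m : ℕ} (K : Set (EuclideanSpace ℝ (Fin m))) :
    Set (EuclideanSpace ℝ (Fin m)) :=
  {y | ∀ s ∈ K, 0 ≤ ⟪y, s⟫}

/-- The penalty Lagrangian
`L_μ(x, y) = p(x) + (μ/2)·d_K(Ax - b - y/μ)² - ‖y‖²/(2μ)`. -/
noncomputable def Lpen {n m : ℕ}
    (A : EuclideanSpace ℝ (Fin n) →L[ℝ] EuclideanSpace ℝ (Fin m))
    (b : EuclideanSpace ℝ (Fin m)) (K : Set (EuclideanSpace ℝ (Fin m)))
    (p : EuclideanSpace ℝ (Fin n) → ℝ) (μ : ℝ)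
    (x : EuclideanSpace ℝ (Fin n)) (y : EuclideanSpace ℝ (Fin m)) : ℝ :=
  p x + μ / 2 * (infDist (A x - b - μ⁻¹ • y) K) ^ 2 - ‖y‖ ^ 2 / (2 * μ)

/-- `g_μ(y) = inf_{x ∈ χ} L_μ(x, y)`. -/
noncomputable def gmu {n m : ℕ}
    (A : EuclideanSpace ℝ (Fin n) →L[ℝ] EuclideanSpace ℝ (Fin m))
    (b : EuclideanSpace ℝ (Fin m)) (K : Set (EuclideanSpace ℝ (Fin m)))
    (χ : Set (EuclideanSpace ℝ (Fin n)))
    (p : EuclideanSpace ℝ (Fin n) → ℝ) (μ : ℝ) (y : EuclideanSpace ℝ (Fin m)) : ℝ :=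
  sInf ((fun x => Lpen A b K p μ x y) '' χ)

/-- The Lagrangian dual function `g₀(z) = inf_{x ∈ χ} { p(x) - ⟪z, Ax - b⟫ }`. -/
noncomputable def gzero {n m : ℕ}
    (A : EuclideanSpace ℝ (Fin n) →L[ℝ] EuclideanSpace ℝ (Fin m))
    (b : EuclideanSpace ℝ (Fin m)) (χ : Set (EuclideanSpace ℝ (Fin n)))
    (p : EuclideanSpace ℝ (Fin n) → ℝ) (z : EuclideanSpace ℝ (Fin m)) : ℝ :=
  sInf ((fun x => p x - ⟪z, A x - b⟫) '' χ)

/-- The optimal value `p* = inf { p(x) : x ∈ χ, Ax - b ∈ K }` of the conic program (P). -/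
noncomputable def pstar {n m : ℕ}
    (A : EuclideanSpace ℝ (Fin n) →L[ℝ] EuclideanSpace ℝ (Fin m))
    (b : EuclideanSpace ℝ (Fin m)) (K : Set (EuclideanSpace ℝ (Fin m)))
    (χ : Set (EuclideanSpace ℝ (Fin n)))
    (p : EuclideanSpace ℝ (Fin n) → ℝ) : ℝ :=
  sInf (p '' {x ∈ χ | A x - b ∈ K})

/-!
The squared distance to a cone is a maximum over the dual cone:
`μ/2 · d_K(v - y/μ)² - ‖y‖²/(2μ) = max_{w ∈ K*} (-⟪w, v⟫ - ‖w - y‖²/(2μ))`,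
attained at `w = μ(s - (v - y/μ))`, where `s` is the projection of `v - y/μ` onto `K`. If `x`
minimizes `L_μ(·, y)` over `χ`, then `x` together with this `w` for `v = Ax - b` is a saddle point,
so minimum and maximum can be exchanged and
`g_μ(y) = max_{w ∈ K*} (g₀(w) - ‖w - y‖²/(2μ))` is a Moreau envelope of `g₀`. Such an envelope is
concave, and at every point a concave quadratic touches it from below; by concavity the reflected
quadratic touches it from above, so it is differentiable. Its gradient is Lipschitz because the
proximal map is firmly nonexpansive. Finally, `L_μ(x, y) ≤ p(x)` for feasible `x` gives `g_μ ≤ p*`,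
while a KKT point satisfies `p* = g₀(y*) ≤ g_μ(y*)`.
-/

open Set Filter Topology

section Preliminaries

variable {E F : Type*} [AddCommGroup E] [Module ℝ E] [NormedAddCommGroup F] [InnerProductSpace ℝ F]

lemma le_of_forall_le_add_mul {a b c : ℝ} (h : ∀ t ∈ Ioc (0 : ℝ) 1, a ≤ b + t * c) : a ≤ b := by
  have hlim : Tendsto (fun t : ℝ => b + t * c) (𝓝[>] 0) (𝓝 b) := by
    have hcont : Continuous fun t : ℝ => b + t * c := by fun_prop
    simpa using (hcont.tendsto 0).mono_left nhdsWithin_le_nhds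
  exact ge_of_tendsto hlim (eventually_of_mem (Ioc_mem_nhdsGT one_pos) h)

lemma le_infDist_sq {X : Type*} [PseudoMetricSpace X] {s : Set X} {x : X} {c : ℝ}
    (hs : s.Nonempty) (h : ∀ z ∈ s, c ≤ dist x z ^ 2) : c ≤ infDist x s ^ 2 :=
  (Real.sqrt_le_iff.1 <| (le_infDist hs).2 fun z hz =>
    Real.sqrt_le_iff.2 ⟨dist_nonneg, h z hz⟩).2

lemma le_add_inner_of_isMinOn_add_norm_sq {f : E → ℝ} {s : Set E} (hf : ConvexOn ℝ s f)
    (T : E →ₗ[ℝ] F) {u : F} {c : ℝ} {x z : E} (hx : x ∈ s)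
    (hmin : IsMinOn (fun x => f x + c / 2 * ‖T x - u‖ ^ 2) s x) (hz : z ∈ s) :
    f x ≤ f z + c * ⟪T x - u, T z - T x⟫ := by
  refine le_of_forall_le_add_mul (c := c / 2 * ‖T z - T x‖ ^ 2) fun t ⟨ht₀, ht₁⟩ => ?_
  have hsub : 0 ≤ 1 - t := sub_nonneg.2 ht₁
  have hle := isMinOn_iff.1 hmin _ (hf.1 hx hz hsub ht₀.le (sub_add_cancel 1 t))
  have hconv := hf.2 hx hz hsub ht₀.le (sub_add_cancel 1 t)
  have hsegment : T ((1 - t) • x + t • z) - u = (T x - u) + t • (T z - T x) := by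
    rw [map_add, map_smul, map_smul]; module
  simp only [hsegment, norm_add_sq_real, real_inner_smul_right, norm_smul, mul_pow,
    Real.norm_eq_abs, sq_abs] at hle
  simp only [smul_eq_mul] at hconv
  refine le_of_mul_le_mul_left ?_ ht₀
  linear_combination hle + hconv

lemma hasGradientAt_of_concaveOn_of_quadratic_le [CompleteSpace F] {f : F → ℝ} {g y : F} {c : ℝ}
    (hf : ConcaveOn ℝ univ f) (hlower : ∀ y', f y + ⟪g, y' - y⟫ - c * ‖y' - y‖ ^ 2 ≤ f y') :
    HasGradientAt f g y := by
  have hupper (y' : F) : f y' ≤ f y + ⟪g, y' - y⟫ + c * ‖y' - y‖ ^ 2 := by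
    have hreflect := hlower (y - (y' - y))
    have hmid := hf.2 (mem_univ y') (mem_univ (y - (y' - y))) (half_pos one_pos).le
      (half_pos one_pos).le (add_halves 1)
    have hcenter : (1 / 2 : ℝ) • y' + (1 / 2 : ℝ) • (y - (y' - y)) = y := by module
    rw [sub_sub_cancel_left, inner_neg_right, norm_neg] at hreflect
    rw [hcenter, smul_eq_mul, smul_eq_mul] at hmid
    linarith
  have hquad : (fun y' => f y' - f y - ⟪g, y' - y⟫) =O[𝓝 y] fun y' => ‖y' - y‖ ^ 2 := by
    refine Asymptotics.IsBigO.of_bound c (Eventually.of_forall fun y' => ?_)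
    rw [Real.norm_eq_abs, Real.norm_of_nonneg (sq_nonneg _), abs_le]
    constructor <;> linarith [hlower y', hupper y']
  rw [hasGradientAt_iff_isLittleO]
  exact hquad.trans_isLittleO (Asymptotics.isLittleO_norm_pow_id one_lt_two |>.comp_tendsto
    (tendsto_sub_nhds_zero_iff.2 tendsto_id))

lemma exists_mem_closure_infDist_eq_norm [CompleteSpace F] (K : PointedCone ℝ F) (v : F) :
    ∃ s ∈ closure (K : Set F), infDist v K = ‖v - s‖ ∧
      s - v ∈ ProperCone.innerDual (K : Set F) ∧ ⟪s - v, s⟫ = 0 := by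
  have hconv : Convex ℝ (closure (K : Set F)) := K.convex.closure
  obtain ⟨s, hs, hmin⟩ := exists_norm_eq_iInf_of_complete_convex
    (K.nonempty.closure) isClosed_closure.isComplete hconv v
  have hvar : ∀ w ∈ closure (K : Set F), 0 ≤ ⟪s - v, w - s⟫ := fun w hw => by
    have hle := (norm_eq_iInf_iff_real_inner_le_zero hconv hs).1 hmin w hw
    rwa [← neg_sub s v, inner_neg_left, neg_nonpos] at hle
  have hzero : ⟪s - v, s⟫ = 0 := by
    have hle := hvar 0 (subset_closure K.zero_mem)
    have hge := hvar ((2 : ℝ) • s) (K.closure.smul_mem zero_le_two hs)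
    rw [zero_sub, inner_neg_right] at hle
    rw [two_smul, add_sub_cancel_right] at hge
    linarith
  refine ⟨s, hs, ?_, fun w hw => ?_, hzero⟩
  · simp only [← infDist_closure (s := (K : Set F)), infDist_eq_iInf, dist_eq_norm, hmin]
  · have hle := hvar w (subset_closure hw)
    rw [inner_sub_right, hzero, sub_zero] at hle
    rwa [innerₗ_apply_apply, real_inner_comm]

lemma exists_pointedCone_coe_eq {K : Set E} (hne : K.Nonempty) (hconv : Convex ℝ K)
    (hcone : ∀ c : ℝ, 0 ≤ c → ∀ x ∈ K, c • x ∈ K) : ∃ C : PointedCone ℝ E, (C : Set E) = K := by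
  obtain ⟨x₀, hx₀⟩ := hne
  refine ⟨{
    carrier := K
    add_mem' := fun {x z} hx hz => ?_
    zero_mem' := ?_
    smul_mem' := fun c x hx => hcone c c.2 x hx }, rfl⟩
  · have hmid := hconv hx hz (half_pos one_pos).le (half_pos one_pos).le (add_halves 1)
    have htwo : x + z = (2 : ℝ) • ((1 / 2 : ℝ) • x + (1 / 2 : ℝ) • z) := by module
    rw [htwo]
    exact hcone 2 zero_le_two _ hmid
  · simpa using hcone 0 le_rfl x₀ hx₀

end Preliminaries

section MoreauEnvelope

variable {F : Type*} [NormedAddCommGroup F] {φ : F → ℝ} {C : Set F} {μ : ℝ}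
  {y y₁ y₂ z z₁ z₂ w : F}

/-- The function of `z` maximized by the proximal map at `y`: the value of `φ` penalized by the
squared distance to `y`. -/
noncomputable def proxObjective (φ : F → ℝ) (μ : ℝ) (y z : F) : ℝ :=
  φ z - ‖z - y‖ ^ 2 / (2 * μ)

/-- `z` is a proximal point of `y` for `φ` restricted to `C`, with step `μ`. The sign convention is
the one for concave `φ`. -/
def IsProx (φ : F → ℝ) (C : Set F) (μ : ℝ) (y z : F) : Prop :=
  z ∈ C ∧ IsMaxOn (proxObjective φ μ y) C z

/-- The Moreau envelope of `φ` restricted to `C`, in the sign convention for concave `φ`. The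
supremum is attained as soon as `y` has a proximal point; it is a junk value if the objective is
unbounded on `C`. -/
noncomputable def moreauEnvelope (φ : F → ℝ) (C : Set F) (μ : ℝ) (y : F) : ℝ :=
  sSup (proxObjective φ μ y '' C)

lemma IsProx.isGreatest (h : IsProx φ C μ y z) :
    IsGreatest (proxObjective φ μ y '' C) (proxObjective φ μ y z) :=
  ⟨mem_image_of_mem _ h.1, forall_mem_image.2 h.2⟩

lemma IsProx.moreauEnvelope_eq (h : IsProx φ C μ y z) :
    moreauEnvelope φ C μ y = proxObjective φ μ y z :=
  h.isGreatest.csSup_eq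

lemma IsProx.le_moreauEnvelope (h : IsProx φ C μ y z) (hw : w ∈ C) :
    proxObjective φ μ y w ≤ moreauEnvelope φ C μ y :=
  h.moreauEnvelope_eq ▸ h.2 hw

variable [InnerProductSpace ℝ F]

lemma IsProx.le_add_inner (hφ : ConcaveOn ℝ C φ) (h : IsProx φ C μ y z) (hw : w ∈ C) :
    φ w ≤ φ z + μ⁻¹ * ⟪z - y, w - z⟫ := by
  have hmin : IsMinOn (fun z => (-φ) z + μ⁻¹ / 2 * ‖LinearMap.id (R := ℝ) z - y‖ ^ 2) C z := by
    refine isMinOn_iff.2 fun w hw => ?_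
    have hle := isMaxOn_iff.1 h.2 w hw
    simp only [proxObjective] at hle
    simp only [Pi.neg_apply, LinearMap.id_apply]
    linear_combination hle
  have hvar := le_add_inner_of_isMinOn_add_norm_sq hφ.neg LinearMap.id h.1 hmin hw
  simp only [Pi.neg_apply, LinearMap.id_apply] at hvar
  linarith

lemma IsProx.norm_sub_sq_le_inner (hφ : ConcaveOn ℝ C φ) (hμ : 0 < μ) (h₁ : IsProx φ C μ y₁ z₁)
    (h₂ : IsProx φ C μ y₂ z₂) : ‖z₁ - z₂‖ ^ 2 ≤ ⟪y₁ - y₂, z₁ - z₂⟫ := by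
  have hsum : 0 ≤ μ⁻¹ * (⟪z₁ - y₁, z₂ - z₁⟫ + ⟪z₂ - y₂, z₁ - z₂⟫) := by
    linarith [h₁.le_add_inner hφ h₂.1, h₂.le_add_inner hφ h₁.1]
  have hregroup : ⟪z₁ - y₁, z₂ - z₁⟫ + ⟪z₂ - y₂, z₁ - z₂⟫
      = ⟪y₁ - y₂, z₁ - z₂⟫ - ‖z₁ - z₂‖ ^ 2 := by
    rw [← real_inner_self_eq_norm_sq]
    simp only [inner_sub_left, inner_sub_right]
    ring
  rw [hregroup] at hsum
  exact sub_nonneg.1 (nonneg_of_mul_nonneg_right hsum (inv_pos.2 hμ))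

lemma IsProx.unique (hφ : ConcaveOn ℝ C φ) (hμ : 0 < μ) (h₁ : IsProx φ C μ y z₁)
    (h₂ : IsProx φ C μ y z₂) : z₁ = z₂ := by
  have hle := h₁.norm_sub_sq_le_inner hφ hμ h₂
  rw [sub_self, inner_zero_left] at hle
  exact sub_eq_zero.1 (norm_eq_zero.1 (sq_nonpos_iff _ |>.1 hle))

lemma IsProx.norm_residual_sub_le (hφ : ConcaveOn ℝ C φ) (hμ : 0 < μ) (h₁ : IsProx φ C μ y₁ z₁)
    (h₂ : IsProx φ C μ y₂ z₂) : ‖(y₁ - z₁) - (y₂ - z₂)‖ ≤ ‖y₁ - y₂‖ := by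
  refine (sq_le_sq₀ (norm_nonneg _) (norm_nonneg _)).1 ?_
  rw [sub_sub_sub_comm, norm_sub_sq_real]
  linarith [h₁.norm_sub_sq_le_inner hφ hμ h₂, sq_nonneg ‖z₁ - z₂‖]

lemma IsProx.norm_gradient_sub_le (hφ : ConcaveOn ℝ C φ) (hμ : 0 < μ) (h₁ : IsProx φ C μ y₁ z₁)
    (h₂ : IsProx φ C μ y₂ z₂) :
    ‖-(μ⁻¹ • (y₁ - z₁)) - -(μ⁻¹ • (y₂ - z₂))‖ ≤ (1 / μ) * ‖y₁ - y₂‖ := by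
  rw [neg_sub_neg, ← smul_sub, norm_smul, norm_inv, Real.norm_of_nonneg hμ.le, one_div,
    norm_sub_rev]
  gcongr
  exact h₁.norm_residual_sub_le hφ hμ h₂

lemma concaveOn_proxObjective (hφ : ConcaveOn ℝ C φ) (hμ : 0 ≤ μ) :
    ConcaveOn ℝ (C ×ˢ univ) fun q : F × F => proxObjective φ μ q.2 q.1 := by
  have hnorm : ConvexOn ℝ univ fun q : F × F => ‖q.1 - q.2‖ ^ 2 :=
    (convexOn_univ_norm.pow (fun _ _ => norm_nonneg _) 2).comp_linearMap
      (LinearMap.fst ℝ F F - LinearMap.snd ℝ F F)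
  have hC : Convex ℝ (C ×ˢ (univ : Set F)) := hφ.1.prod convex_univ
  have hfst : ConcaveOn ℝ (C ×ˢ univ) fun q : F × F => φ q.1 :=
    (hφ.comp_linearMap (LinearMap.fst ℝ F F)).subset (fun _ hq => hq.1) hC
  refine (hfst.sub ((hnorm.subset (subset_univ _) hC).smul
    (inv_nonneg.2 (mul_nonneg zero_le_two hμ)))).congr fun q _ => ?_
  simp only [Pi.sub_apply, proxObjective, smul_eq_mul, div_eq_inv_mul]

lemma concaveOn_moreauEnvelope (hφ : ConcaveOn ℝ C φ) (hμ : 0 ≤ μ)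
    (hprox : ∀ y, ∃ z, IsProx φ C μ y z) : ConcaveOn ℝ univ (moreauEnvelope φ C μ) := by
  refine ⟨convex_univ, fun y₁ _ y₂ _ a c ha hc hac => ?_⟩
  obtain ⟨z₁, h₁⟩ := hprox y₁
  obtain ⟨z₂, h₂⟩ := hprox y₂
  obtain ⟨z, h⟩ := hprox (a • y₁ + c • y₂)
  rw [h₁.moreauEnvelope_eq, h₂.moreauEnvelope_eq]
  exact ((concaveOn_proxObjective hφ hμ).2 (x := (z₁, y₁)) ⟨h₁.1, mem_univ _⟩ (y := (z₂, y₂))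
    ⟨h₂.1, mem_univ _⟩ ha hc hac).trans (h.le_moreauEnvelope (hφ.1 h₁.1 h₂.1 ha hc hac))

lemma proxObjective_eq_add_inner_sub (φ : F → ℝ) (μ : ℝ) (y y' z : F) :
    proxObjective φ μ y' z =
      proxObjective φ μ y z + ⟪-(μ⁻¹ • (y - z)), y' - y⟫ - (2 * μ)⁻¹ * ‖y' - y‖ ^ 2 := by
  have hsplit : z - y' = -((y - z) + (y' - y)) := by abel
  rw [proxObjective, proxObjective, hsplit, norm_neg, norm_add_sq_real, norm_sub_rev z y,
    inner_neg_left, real_inner_smul_left]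
  ring

lemma IsProx.hasGradientAt_moreauEnvelope [CompleteSpace F] (hφ : ConcaveOn ℝ C φ) (hμ : 0 ≤ μ)
    (hprox : ∀ y, ∃ z, IsProx φ C μ y z) (h : IsProx φ C μ y z) :
    HasGradientAt (moreauEnvelope φ C μ) (-(μ⁻¹ • (y - z))) y := by
  refine hasGradientAt_of_concaveOn_of_quadratic_le (c := (2 * μ)⁻¹)
    (concaveOn_moreauEnvelope hφ hμ hprox) fun y' => ?_
  obtain ⟨z', h'⟩ := hprox y'
  rw [h.moreauEnvelope_eq, ← proxObjective_eq_add_inner_sub]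
  exact h'.le_moreauEnvelope h.1

end MoreauEnvelope

section PenaltyDuality

variable {E F : Type*} [AddCommGroup E] [Module ℝ E] [TopologicalSpace E]
  [NormedAddCommGroup F] [InnerProductSpace ℝ F]

/-- The penalty Lagrangian `L_μ` of `min {p x : A x - b ∈ K}`: `Lpen` for a constraint with values
in an arbitrary real inner product space. -/
noncomputable def penaltyLagrangian (A : E →L[ℝ] F) (b : F) (K : Set F) (p : E → ℝ) (μ : ℝ)
    (x : E) (y : F) : ℝ :=
  p x + μ / 2 * infDist (A x - b - μ⁻¹ • y) K ^ 2 - ‖y‖ ^ 2 / (2 * μ)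

/-- The penalty dual function `g_μ` in the generality of `penaltyLagrangian`; the junk value of
`sInf` occurs only if `χ` is empty or the penalty Lagrangian is unbounded below on `χ`. -/
noncomputable def penaltyDual (A : E →L[ℝ] F) (b : F) (K : Set F) (χ : Set E) (p : E → ℝ) (μ : ℝ)
    (y : F) : ℝ :=
  sInf ((fun x => penaltyLagrangian A b K p μ x y) '' χ)

/-- The Lagrangian dual function `g₀` in the generality of `penaltyLagrangian`; the junk value of
`sInf` occurs only if `χ` is empty or the Lagrangian is unbounded below on `χ`. -/
noncomputable def lagrangianDual (A : E →L[ℝ] F) (b : F) (χ : Set E) (p : E → ℝ) (z : F) : ℝ :=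
  sInf ((fun x => p x - ⟪z, A x - b⟫) '' χ)

variable {A : E →L[ℝ] F} {b : F} {χ : Set E} {p : E → ℝ} {μ : ℝ} {x : E} {y w : F}

lemma lagrangianDual_le (hχ : IsCompact χ) (hp : LowerSemicontinuousOn p χ) (z : F) (hx : x ∈ χ) :
    lagrangianDual A b χ p z ≤ p x - ⟪z, A x - b⟫ := by
  have hcont : ContinuousOn (fun x => -⟪z, A x - b⟫) χ := by fun_prop
  have hlsc : LowerSemicontinuousOn (fun x => p x - ⟪z, A x - b⟫) χ := by
    simpa only [sub_eq_add_neg] using hp.add hcont.lowerSemicontinuousOn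
  exact csInf_le (hlsc.bddBelow_of_isCompact hχ) (mem_image_of_mem _ hx)

lemma concaveOn_lagrangianDual (hχne : χ.Nonempty) (hχ : IsCompact χ)
    (hp : LowerSemicontinuousOn p χ) : ConcaveOn ℝ univ (lagrangianDual A b χ p) := by
  refine ⟨convex_univ, fun z₁ _ z₂ _ a c ha hc hac => ?_⟩
  refine le_csInf (hχne.image _) (forall_mem_image.2 fun x hx => ?_)
  calc a • lagrangianDual A b χ p z₁ + c • lagrangianDual A b χ p z₂
      ≤ a • (p x - ⟪z₁, A x - b⟫) + c • (p x - ⟪z₂, A x - b⟫) := by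
        gcongr <;> exact lagrangianDual_le hχ hp _ hx
    _ = (a + c) * p x - ⟪a • z₁ + c • z₂, A x - b⟫ := by
        simp only [smul_eq_mul, inner_add_left, real_inner_smul_left]; ring
    _ = p x - ⟪a • z₁ + c • z₂, A x - b⟫ := by rw [hac, one_mul]

lemma lowerSemicontinuousOn_penaltyLagrangian (K : Set F) (hp : LowerSemicontinuousOn p χ)
    (μ : ℝ) (y : F) : LowerSemicontinuousOn (fun x => penaltyLagrangian A b K p μ x y) χ := by
  have hdist : Continuous fun x => infDist (A x - b - μ⁻¹ • y) K :=
    (continuous_infDist_pt K).comp (by fun_prop)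
  have hcont : Continuous fun x =>
      μ / 2 * infDist (A x - b - μ⁻¹ • y) K ^ 2 - ‖y‖ ^ 2 / (2 * μ) :=
    ((hdist.pow 2).const_mul (μ / 2)).sub continuous_const
  simpa only [penaltyLagrangian, add_sub_assoc] using
    hp.add hcont.continuousOn.lowerSemicontinuousOn

lemma penaltyDual_le {K : Set F} (hχ : IsCompact χ) (hp : LowerSemicontinuousOn p χ)
    (hx : x ∈ χ) : penaltyDual A b K χ p μ y ≤ penaltyLagrangian A b K p μ x y :=
  csInf_le ((lowerSemicontinuousOn_penaltyLagrangian K hp μ y).bddBelow_of_isCompact hχ)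
    (mem_image_of_mem _ hx)

lemma penaltyLagrangian_le {K : Set F} (hμ : 0 < μ) (hxK : A x - b ∈ K) (y : F) :
    penaltyLagrangian A b K p μ x y ≤ p x := by
  have hdist : infDist (A x - b - μ⁻¹ • y) K ≤ μ⁻¹ * ‖y‖ := by
    refine (infDist_le_dist_of_mem hxK).trans_eq ?_
    rw [dist_eq_norm, sub_sub_cancel_left, norm_neg, norm_smul, norm_inv,
      Real.norm_of_nonneg hμ.le]
  calc penaltyLagrangian A b K p μ x y
      ≤ p x + μ / 2 * (μ⁻¹ * ‖y‖) ^ 2 - ‖y‖ ^ 2 / (2 * μ) := by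
        rw [penaltyLagrangian]; gcongr; exact infDist_nonneg
    _ = p x := by field_simp; ring

lemma penaltyDual_mem_lowerBounds {K : Set F} (hχ : IsCompact χ)
    (hp : LowerSemicontinuousOn p χ) (hμ : 0 < μ) (y : F) :
    penaltyDual A b K χ p μ y ∈ lowerBounds (p '' {x ∈ χ | A x - b ∈ K}) :=
  forall_mem_image.2 fun _ hx => (penaltyDual_le hχ hp hx.1).trans (penaltyLagrangian_le hμ hx.2 y)

/- Completing the square in `w`: the last term vanishes exactly at the optimal multiplier. -/
lemma penalty_norm_sq_eq (hμ : μ ≠ 0) (v y w s : F) :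
    μ / 2 * ‖v - μ⁻¹ • y - s‖ ^ 2 - ‖y‖ ^ 2 / (2 * μ) =
      -⟪w, v⟫ - ‖w - y‖ ^ 2 / (2 * μ) + ⟪w, s⟫ +
        ‖w - μ • (s - (v - μ⁻¹ • y))‖ ^ 2 / (2 * μ) := by
  obtain ⟨u, rfl⟩ : ∃ u, v = u + μ⁻¹ • y := ⟨v - μ⁻¹ • y, by abel⟩
  rw [add_sub_cancel_right, norm_sub_rev u s, norm_sub_sq_real w y, norm_sub_sq_real w, norm_smul,
    mul_pow, Real.norm_eq_abs, sq_abs, inner_add_right, real_inner_smul_right,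
    real_inner_smul_right, inner_sub_right]
  field_simp
  ring

lemma isMinOn_lagrangian_of_isMinOn_penaltyLagrangian {K : Set F} {s : F} (hp : ConvexOn ℝ χ p)
    (hμ : 0 ≤ μ) (hx : x ∈ χ) (hmin : IsMinOn (fun x => penaltyLagrangian A b K p μ x y) χ x)
    (hs : s ∈ closure K) (hdist : infDist (A x - b - μ⁻¹ • y) K = ‖A x - b - μ⁻¹ • y - s‖) :
    IsMinOn (fun x' => p x' - ⟪μ • (s - (A x - b - μ⁻¹ • y)), A x' - b⟫) χ x := by
  have hmin_fixed_target :
      IsMinOn (fun x => p x + μ / 2 * ‖(A : E →ₗ[ℝ] F) x - (b + μ⁻¹ • y + s)‖ ^ 2) χ x := by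
    refine isMinOn_iff.2 fun x' hx' => ?_
    have hle := isMinOn_iff.1 hmin x' hx'
    have hdist' : infDist (A x' - b - μ⁻¹ • y) K ^ 2 ≤ ‖A x' - b - μ⁻¹ • y - s‖ ^ 2 := by
      rw [← infDist_closure, ← dist_eq_norm]
      exact pow_le_pow_left₀ infDist_nonneg (infDist_le_dist_of_mem hs) 2
    simp only [penaltyLagrangian, hdist] at hle
    simp only [ContinuousLinearMap.coe_coe, ← sub_sub]
    linarith [mul_le_mul_of_nonneg_left hdist' (div_nonneg hμ zero_le_two)]
  refine isMinOn_iff.2 fun x' hx' => ?_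
  have hvar := le_add_inner_of_isMinOn_add_norm_sq hp (A : E →ₗ[ℝ] F) hx hmin_fixed_target hx'
  have hneg : A x - (b + μ⁻¹ • y + s) = -(s - (A x - b - μ⁻¹ • y)) := by abel
  have hdiff : A x' - A x = (A x' - b) - (A x - b) := by abel
  simp only [ContinuousLinearMap.coe_coe, hneg, hdiff, inner_neg_left,
    inner_sub_right _ (A x' - b)] at hvar
  simp only [real_inner_smul_left]
  linarith

variable [CompleteSpace F]

lemma lagrangian_sub_le_penaltyLagrangian {K : Set F} (hK : K.Nonempty) (hμ : 0 < μ)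
    (hw : w ∈ ProperCone.innerDual K) (x : E) (y : F) :
    p x - ⟪w, A x - b⟫ - ‖w - y‖ ^ 2 / (2 * μ) ≤ penaltyLagrangian A b K p μ x y := by
  have hdist : (-⟪w, A x - b⟫ - ‖w - y‖ ^ 2 / (2 * μ) + ‖y‖ ^ 2 / (2 * μ)) / (μ / 2) ≤
      infDist (A x - b - μ⁻¹ • y) K ^ 2 := by
    refine le_infDist_sq hK fun s hs => ?_
    have hws : 0 ≤ ⟪w, s⟫ := real_inner_comm w s ▸ hw hs
    have hsq : 0 ≤ ‖w - μ • (s - (A x - b - μ⁻¹ • y))‖ ^ 2 / (2 * μ) := by positivity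
    rw [dist_eq_norm, div_le_iff₀' (half_pos hμ)]
    linarith [penalty_norm_sq_eq hμ.ne' (A x - b) y w s]
  rw [div_le_iff₀' (half_pos hμ)] at hdist
  rw [penaltyLagrangian]
  linarith

lemma proxObjective_lagrangianDual_le_penaltyDual {K : Set F} (hK : K.Nonempty)
    (hχne : χ.Nonempty) (hχ : IsCompact χ) (hp : LowerSemicontinuousOn p χ) (hμ : 0 < μ)
    (hw : w ∈ ProperCone.innerDual K) (y : F) :
    proxObjective (lagrangianDual A b χ p) μ y w ≤ penaltyDual A b K χ p μ y :=
  le_csInf (hχne.image _) <| forall_mem_image.2 fun x hx =>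
    (sub_le_sub_right (lagrangianDual_le hχ hp w hx) _).trans
      (lagrangian_sub_le_penaltyLagrangian hK hμ hw x y)

lemma exists_penaltyDual_le_proxObjective (K : PointedCone ℝ F) (hχne : χ.Nonempty)
    (hχ : IsCompact χ) (hp : ConvexOn ℝ χ p) (hplsc : LowerSemicontinuousOn p χ) (hμ : 0 < μ)
    (y : F) : ∃ z ∈ ProperCone.innerDual (K : Set F),
      penaltyDual A b K χ p μ y ≤ proxObjective (lagrangianDual A b χ p) μ y z := by
  obtain ⟨x, hx, hmin⟩ := LowerSemicontinuousOn.exists_isMinOn hχne hχ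
    (lowerSemicontinuousOn_penaltyLagrangian (A := A) (b := b) (K : Set F) hplsc μ y)
  obtain ⟨s, hs, hdist, hdual, horth⟩ := exists_mem_closure_infDist_eq_norm K (A x - b - μ⁻¹ • y)
  have hxmin := isMinOn_lagrangian_of_isMinOn_penaltyLagrangian hp hμ.le hx hmin hs hdist
  have hsq := penalty_norm_sq_eq hμ.ne' (A x - b) y (μ • (s - (A x - b - μ⁻¹ • y))) s
  rw [sub_self, norm_zero, real_inner_smul_left _ s, horth] at hsq
  set z := μ • (s - (A x - b - μ⁻¹ • y))
  refine ⟨z, (ProperCone.innerDual (K : Set F)).smul_mem hdual hμ.le, ?_⟩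
  calc penaltyDual A b K χ p μ y
      ≤ penaltyLagrangian A b K p μ x y := penaltyDual_le hχ hplsc hx
    _ = p x - ⟪z, A x - b⟫ - ‖z - y‖ ^ 2 / (2 * μ) := by
        rw [penaltyLagrangian, hdist]; linear_combination hsq
    _ ≤ proxObjective (lagrangianDual A b χ p) μ y z :=
        sub_le_sub_right (le_csInf (hχne.image _) (forall_mem_image.2 fun _ hx' => hxmin hx')) _

lemma exists_isProx_and_penaltyDual_eq (K : PointedCone ℝ F) (hχne : χ.Nonempty)
    (hχ : IsCompact χ) (hp : ConvexOn ℝ χ p) (hplsc : LowerSemicontinuousOn p χ) (hμ : 0 < μ)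
    (y : F) : ∃ z, IsProx (lagrangianDual A b χ p) (ProperCone.innerDual (K : Set F)) μ y z ∧
      penaltyDual A b K χ p μ y = proxObjective (lagrangianDual A b χ p) μ y z := by
  have hweak {w : F} (hw : w ∈ ProperCone.innerDual (K : Set F)) :
      proxObjective (lagrangianDual A b χ p) μ y w ≤ penaltyDual A b K χ p μ y :=
    proxObjective_lagrangianDual_le_penaltyDual K.nonempty hχne hχ hplsc hμ hw y
  obtain ⟨z, hz, hstrong⟩ := exists_penaltyDual_le_proxObjective K hχne hχ hp hplsc hμ y
  exact ⟨z, ⟨hz, fun _ hw => (hweak hw).trans hstrong⟩, hstrong.antisymm (hweak hz)⟩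

lemma penaltyDual_eq_moreauEnvelope (K : PointedCone ℝ F) (hχne : χ.Nonempty)
    (hχ : IsCompact χ) (hp : ConvexOn ℝ χ p) (hplsc : LowerSemicontinuousOn p χ) (hμ : 0 < μ) :
    penaltyDual A b K χ p μ =
      moreauEnvelope (lagrangianDual A b χ p) (ProperCone.innerDual (K : Set F)) μ := by
  funext y
  obtain ⟨z, hz, heq⟩ := exists_isProx_and_penaltyDual_eq K hχne hχ hp hplsc hμ y
  exact heq.trans hz.moreauEnvelope_eq.symm

lemma penaltyDual_le_of_isGLB_lagrangianDual {K : Set F} (hK : K.Nonempty) (hχne : χ.Nonempty)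
    (hχ : IsCompact χ) (hp : LowerSemicontinuousOn p χ) (hμ : 0 < μ) {ystar : F}
    (hystar : ystar ∈ ProperCone.innerDual K)
    (hKKT : IsGLB (p '' {x ∈ χ | A x - b ∈ K}) (lagrangianDual A b χ p ystar)) (y : F) :
    penaltyDual A b K χ p μ y ≤ penaltyDual A b K χ p μ ystar :=
  calc penaltyDual A b K χ p μ y
      ≤ lagrangianDual A b χ p ystar := hKKT.2 (penaltyDual_mem_lowerBounds hχ hp hμ y)
    _ = proxObjective (lagrangianDual A b χ p) μ ystar ystar := by simp [proxObjective]
    _ ≤ penaltyDual A b K χ p μ ystar :=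
        proxObjective_lagrangianDual_le_penaltyDual hK hχne hχ hp hμ hystar ystar

theorem stmt_8_general (K : PointedCone ℝ F) (A : E →L[ℝ] F) (b : F) {χ : Set E}
    (hχne : χ.Nonempty) (hχ : IsCompact χ) {p : E → ℝ} (hp : ConvexOn ℝ χ p)
    (hplsc : LowerSemicontinuousOn p χ) {μ : ℝ} (hμ : 0 < μ) :
    (∀ y, ∃! z, IsProx (lagrangianDual A b χ p) (ProperCone.innerDual (K : Set F)) μ y z) ∧
    ConcaveOn ℝ univ (penaltyDual A b K χ p μ) ∧
    (∀ y z, IsProx (lagrangianDual A b χ p) (ProperCone.innerDual (K : Set F)) μ y z →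
      HasGradientAt (penaltyDual A b K χ p μ) (-(μ⁻¹ • (y - z))) y) ∧
    (∀ y₁ z₁ y₂ z₂,
      IsProx (lagrangianDual A b χ p) (ProperCone.innerDual (K : Set F)) μ y₁ z₁ →
      IsProx (lagrangianDual A b χ p) (ProperCone.innerDual (K : Set F)) μ y₂ z₂ →
      ‖-(μ⁻¹ • (y₁ - z₁)) - -(μ⁻¹ • (y₂ - z₂))‖ ≤ (1 / μ) * ‖y₁ - y₂‖) ∧
    (∀ ystar ∈ ProperCone.innerDual (K : Set F),
      IsGLB (p '' {x ∈ χ | A x - b ∈ K}) (lagrangianDual A b χ p ystar) →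
      ∀ y, penaltyDual A b K χ p μ y ≤ penaltyDual A b K χ p μ ystar) := by
  have hconc : ConcaveOn ℝ (ProperCone.innerDual (K : Set F)) (lagrangianDual A b χ p) :=
    (concaveOn_lagrangianDual hχne hχ hplsc).subset (subset_univ _)
      (ProperCone.innerDual (K : Set F)).convex
  have hprox (y : F) :
      ∃ z, IsProx (lagrangianDual A b χ p) (ProperCone.innerDual (K : Set F)) μ y z :=
    (exists_isProx_and_penaltyDual_eq K hχne hχ hp hplsc hμ y).imp fun _ hz => hz.1
  have henv := penaltyDual_eq_moreauEnvelope (A := A) (b := b) K hχne hχ hp hplsc hμ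
  exact ⟨fun y => existsUnique_of_exists_of_unique (hprox y) fun _ _ h₁ h₂ => h₁.unique hconc hμ h₂,
    henv ▸ concaveOn_moreauEnvelope hconc hμ.le hprox,
    fun _ _ hz => henv ▸ hz.hasGradientAt_moreauEnvelope hconc hμ.le hprox,
    fun _ _ _ _ h₁ h₂ => h₁.norm_gradient_sub_le hconc hμ h₂,
    fun _ => penaltyDual_le_of_isGLB_lagrangianDual K.nonempty hχne hχ hplsc hμ⟩

end PenaltyDuality

lemma coe_innerDual_eq_dualCone {m : ℕ} (K : Set (EuclideanSpace ℝ (Fin m))) :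
    (ProperCone.innerDual K : Set (EuclideanSpace ℝ (Fin m))) = dualCone K := by
  ext y
  simp only [SetLike.mem_coe, ProperCone.mem_innerDual, dualCone, mem_ofPred_eq, real_inner_comm]

/-- under Assumption 1 and for fixed `μ > 0`, `g_μ` is a finite concave
continuously differentiable function with `∇g_μ(y) = -(y - π_μ(y))/μ`, where
`π_μ(y) ∈ K*` is the unique maximizer of `z ↦ g₀(z) - (1/(2μ))‖z - y‖²` over `K*`;
`∇g_μ` is Lipschitz with constant `1/μ`; and every KKT point `y*` maximizes `g_μ`. -/
theorem stmt_8 {n m : ℕ} (K : Set (EuclideanSpace ℝ (Fin m)))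
    (hKne : K.Nonempty) (hKcl : IsClosed K) (hKcv : Convex ℝ K)
    (hKcone : ∀ (c : ℝ), 0 ≤ c → ∀ x ∈ K, c • x ∈ K)
    (A : EuclideanSpace ℝ (Fin n) →L[ℝ] EuclideanSpace ℝ (Fin m))
    (b : EuclideanSpace ℝ (Fin m))
    (χ : Set (EuclideanSpace ℝ (Fin n)))
    (hχne : χ.Nonempty) (hχcp : IsCompact χ) (hχcv : Convex ℝ χ)
    (p : EuclideanSpace ℝ (Fin n) → ℝ) (hp : ConvexOn ℝ Set.univ p)
    (hfeas : {x ∈ χ | A x - b ∈ K}.Nonempty)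
    (hKKT : ∃ ystar ∈ dualCone K, gzero A b χ p ystar = pstar A b K χ p)
    (μ : ℝ) (hμ : 0 < μ)
    (π : EuclideanSpace ℝ (Fin m) → EuclideanSpace ℝ (Fin m))
    (hπmem : ∀ y, π y ∈ dualCone K)
    (hπmax : ∀ y, ∀ w ∈ dualCone K,
      gzero A b χ p w - ‖w - y‖ ^ 2 / (2 * μ)
        ≤ gzero A b χ p (π y) - ‖π y - y‖ ^ 2 / (2 * μ)) :
    ConcaveOn ℝ Set.univ (gmu A b K χ p μ) ∧
    (∀ y, HasGradientAt (gmu A b K χ p μ) (-(μ⁻¹ • (y - π y))) y) ∧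
    (∀ y₁ y₂, ‖-(μ⁻¹ • (y₁ - π y₁)) - -(μ⁻¹ • (y₂ - π y₂))‖ ≤ (1 / μ) * ‖y₁ - y₂‖) ∧
    (∀ ystar ∈ dualCone K, gzero A b χ p ystar = pstar A b K χ p →
      ∀ y, gmu A b K χ p μ y ≤ gmu A b K χ p μ ystar) := by
  obtain ⟨C, rfl⟩ := exists_pointedCone_coe_eq hKne hKcv hKcone
  have hpχ : ConvexOn ℝ χ p := hp.subset (subset_univ χ) hχcv
  have hplsc : LowerSemicontinuousOn p χ :=
    ((hp.continuousOn isOpen_univ).mono (subset_univ χ)).lowerSemicontinuousOn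
  rw [← coe_innerDual_eq_dualCone] at hπmem hπmax ⊢
  have hπ (y : EuclideanSpace ℝ (Fin m)) : IsProx (lagrangianDual A b χ p)
      (ProperCone.innerDual (C : Set (EuclideanSpace ℝ (Fin m)))) μ y (π y) :=
    ⟨hπmem y, fun w hw => hπmax y w hw⟩
  have hpstar : IsGLB (p '' {x ∈ χ | A x - b ∈ C}) (pstar A b C χ p) :=
    isGLB_csInf (hfeas.image p) ⟨_, penaltyDual_mem_lowerBounds hχcp hplsc hμ 0⟩
  obtain ⟨-, hconcave, hgrad, hlip, hmax⟩ := stmt_8_general C A b hχne hχcp hpχ hplsc hμ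
  exact ⟨hconcave, fun y => hgrad y (π y) (hπ y), fun y₁ y₂ => hlip _ _ _ _ (hπ y₁) (hπ y₂),
    fun ystar hystar hKKT => hmax ystar hystar (show IsGLB _ (gzero A b χ p ystar) from
      hKKT ▸ hpstar)⟩
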